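/- arXiv:quant-ph/0010040 — 2 statements merged into one kernel-verified Lean document; each statement's English description precedes it below -/
import Mathlib

section
/- Let N ≥ 2 be a natural number, work in ℂ^N, fix x₀ ∈ Fin N with standard basis vector e_{x₀}, let ψ₀ be the equal superposition (1/√N, …, 1/√N), let β = arcsin(1/√N), let Q = -(I_{ψ₀} ∘ I_{e_{x₀}}), and let K be the nearest integer to π/(4β) - 1/2. Then after K Grover iterations the probability of measuring the marked state satisfies ‖⟪e_{x₀}, Q^K ψ₀⟫‖² ≥ 1 - 1/N; equivalently, the probability of error is at most 1/N. -/
open scoped ComplexInnerProductSpace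

/-- Inversion about the hyperplane orthogonal to `ψ`: `I_ψ x = x - 2⟪ψ, x⟫ • ψ`. -/
noncomputable def inversion {E : Type*} [NormedAddCommGroup E] [InnerProductSpace ℂ E]
    (ψ : E) (x : E) : E :=
  x - ((2 : ℂ) * ⟪ψ, x⟫) • ψ

/-!
Let `sin β` be the modulus of the overlap `⟪e, ψ⟫` of the marked unit vector `e` with the initial
unit vector `ψ`. The Grover iterate `-(I_ψ ∘ I_e)` rotates the plane spanned by `e` and `ψ` by
`2β`, so up to a fixed phase the amplitude of `e` after `k` steps is `sin ((2k + 1)β)`. Rounding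
`π / (4β) - 1 / 2` brings the angle `(2K + 1)β` within `β` of `π / 2`, where the sine is at least
`cos β`; hence the error probability is at most `sin² β = |⟪e, ψ⟫|²`.
-/

section GroverIterate

variable {E : Type*} [NormedAddCommGroup E] [InnerProductSpace ℂ E] {e ψ : E}

lemma inner_inversion (φ ψ x : E) :
    ⟪φ, inversion ψ x⟫ = ⟪φ, x⟫ - 2 * ⟪ψ, x⟫ * ⟪φ, ψ⟫ := by
  rw [inversion, inner_sub_right, inner_smul_right]

lemma inner_inversion_self (hψ : ‖ψ‖ = 1) (x : E) : ⟪ψ, inversion ψ x⟫ = -⟪ψ, x⟫ := by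
  rw [inner_inversion, inner_self_eq_one_of_norm_eq_one hψ]
  ring

/-- One step `-(I_ψ ∘ I_e)` of Grover's algorithm (amplitude amplification) with marked vector `e`
and initial vector `ψ`. -/
noncomputable def groverIterate (e ψ v : E) : E :=
  -inversion ψ (inversion e v)

lemma inner_initial_groverIterate (hψ : ‖ψ‖ = 1) (v : E) :
    ⟪ψ, groverIterate e ψ v⟫ = ⟪ψ, v⟫ - 2 * ⟪e, v⟫ * ⟪ψ, e⟫ := by
  rw [groverIterate, inner_neg_right, inner_inversion_self hψ, neg_neg, inner_inversion]

lemma inner_marked_groverIterate (he : ‖e‖ = 1) (hψ : ‖ψ‖ = 1) (v : E) :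
    ⟪e, groverIterate e ψ v⟫ = ⟪e, v⟫ + 2 * ⟪e, ψ⟫ * ⟪ψ, groverIterate e ψ v⟫ := by
  rw [groverIterate, inner_neg_right, inner_neg_right, inner_inversion_self hψ,
    inner_inversion e ψ, inner_inversion_self he]
  ring

lemma inner_iterate_groverIterate {ω : ℂ} {β : ℝ} (he : ‖e‖ = 1) (hψ : ‖ψ‖ = 1) (hω : ‖ω‖ = 1)
    (hoverlap : ⟪e, ψ⟫ = ω * Real.sin β) (k : ℕ) :
    ⟪e, (groverIterate e ψ)^[k] ψ⟫ = ω * Real.sin ((2 * k + 1) * β) ∧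
      ⟪ψ, (groverIterate e ψ)^[k] ψ⟫ = Real.cos (2 * k * β) := by
  induction k with
  | zero => simp [hoverlap, hψ]
  | succ k ih =>
    obtain ⟨ih_marked, ih_initial⟩ := ih
    have hphase : ω * (starRingEnd ℂ) ω = 1 := by simp [Complex.mul_conj', hω]
    have hoverlap_symm : ⟪ψ, e⟫ = (starRingEnd ℂ) ω * Real.sin β := by
      rw [← inner_conj_symm, hoverlap, map_mul, Complex.conj_ofReal]
    have hcos : Real.cos (2 * (k + 1 : ℕ) * β) =
        Real.cos (2 * k * β) - 2 * Real.sin ((2 * k + 1) * β) * Real.sin β := by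
      rw [Real.two_mul_sin_mul_sin]
      push_cast
      ring_nf
    have hsin : Real.sin ((2 * (k + 1 : ℕ) + 1) * β) =
        Real.sin ((2 * k + 1) * β) + 2 * Real.sin β * Real.cos (2 * (k + 1 : ℕ) * β) := by
      have hdiff : β - 2 * (k + 1 : ℕ) * β = -((2 * k + 1) * β) := by push_cast; ring
      rw [Real.two_mul_sin_mul_cos, hdiff, Real.sin_neg, add_neg_cancel_left]
      ring_nf
    have initial : ⟪ψ, (groverIterate e ψ)^[k + 1] ψ⟫ = Real.cos (2 * (k + 1 : ℕ) * β) := by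
      rw [Function.iterate_succ_apply', inner_initial_groverIterate hψ, ih_marked, ih_initial,
        hoverlap_symm, hcos]
      push_cast
      linear_combination (-2 * Complex.sin ((2 * k + 1) * β) * Complex.sin β) * hphase
    refine ⟨?_, initial⟩
    rw [Function.iterate_succ_apply'] at initial ⊢
    rw [inner_marked_groverIterate he hψ, initial, ih_marked, hoverlap, hsin]
    push_cast
    ring

lemma norm_inner_iterate_groverIterate {β : ℝ} (he : ‖e‖ = 1) (hψ : ‖ψ‖ = 1)
    (hβ : Real.sin β = ‖⟪e, ψ⟫‖) (k : ℕ) :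
    ‖⟪e, (groverIterate e ψ)^[k] ψ⟫‖ = |Real.sin ((2 * k + 1) * β)| := by
  obtain ⟨ω, hω, hoverlap⟩ := RCLike.exists_norm_mul_eq_self ⟪e, ψ⟫
  rw [(inner_iterate_groverIterate he hψ hω (by rw [hβ]; exact hoverlap.symm) k).1, norm_mul, hω,
    one_mul, Complex.norm_real, Real.norm_eq_abs]

end GroverIterate

lemma abs_sub_two_mul_round_add_one_mul_le {β : ℝ} (hβ : 0 < β) (t : ℝ) :
    |t - (2 * round (t / (2 * β) - 1 / 2) + 1) * β| ≤ β := by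
  set r := t / (2 * β) - 1 / 2 with hr
  have hdist : t - (2 * round r + 1) * β = 2 * β * (r - round r) := by
    rw [hr]
    field_simp
    ring
  calc |t - (2 * round r + 1) * β| = 2 * β * |r - round r| := by
        rw [hdist, abs_mul, abs_of_pos (by positivity)]
    _ ≤ 2 * β * (1 / 2) := by gcongr; exact abs_sub_round r
    _ = β := by ring

lemma cos_le_sin_of_abs_pi_div_two_sub_le {β θ : ℝ} (hβ : β ≤ Real.pi)
    (hθ : |Real.pi / 2 - θ| ≤ β) : Real.cos β ≤ Real.sin θ := by
  rw [← Real.cos_pi_div_two_sub, ← Real.cos_abs (Real.pi / 2 - θ)]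
  exact Real.cos_le_cos_of_nonneg_of_le_pi (abs_nonneg _) hβ hθ

lemma norm_eq_one_of_forall_eq_one_div_sqrt_card {ι : Type*} [Fintype ι] [Nonempty ι]
    {ψ : EuclideanSpace ℂ ι} (hψ : ∀ i, ψ i = ((1 / √(Fintype.card ι) : ℝ) : ℂ)) : ‖ψ‖ = 1 := by
  simp [EuclideanSpace.norm_eq, hψ]

theorem grover_success_probability_general {E : Type*} [NormedAddCommGroup E]
    [InnerProductSpace ℂ E] {e ψ : E} (he : ‖e‖ = 1) (hψ : ‖ψ‖ = 1) (hoverlap : ⟪e, ψ⟫ ≠ 0)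
    {β : ℝ} (hβ : β = Real.arcsin ‖⟪e, ψ⟫‖)
    {K : ℕ} (hK : (K : ℤ) = round (Real.pi / (4 * β) - 1 / 2)) :
    1 - ‖⟪e, ψ⟫‖ ^ 2 ≤ ‖⟪e, (groverIterate e ψ)^[K] ψ⟫‖ ^ 2 := by
  have hle_one : ‖⟪e, ψ⟫‖ ≤ 1 := by simpa [he, hψ] using norm_inner_le_norm (𝕜 := ℂ) e ψ
  have hsin : Real.sin β = ‖⟪e, ψ⟫‖ := by
    rw [hβ, Real.sin_arcsin (by linarith [norm_nonneg ⟪e, ψ⟫]) hle_one]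
  have hβ_pos : 0 < β := hβ ▸ Real.arcsin_pos.2 (norm_pos_iff.2 hoverlap)
  have hβ_le : β ≤ Real.pi / 2 := hβ ▸ Real.arcsin_le_pi_div_two _
  have hangle : |Real.pi / 2 - (2 * K + 1) * β| ≤ β := by
    have hround := abs_sub_two_mul_round_add_one_mul_le hβ_pos (Real.pi / 2)
    rwa [div_div, ← mul_assoc, show (2 * 2 : ℝ) = 4 by norm_num, ← hK, Int.cast_natCast] at hround
  have hcos_le : Real.cos β ≤ Real.sin ((2 * K + 1) * β) :=
    cos_le_sin_of_abs_pi_div_two_sub_le (by linarith) hangle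
  have hcos_nonneg : 0 ≤ Real.cos β := Real.cos_nonneg_of_mem_Icc ⟨by linarith, hβ_le⟩
  calc 1 - ‖⟪e, ψ⟫‖ ^ 2 = Real.cos β ^ 2 := by rw [← hsin, Real.cos_sq']
    _ ≤ Real.sin ((2 * K + 1) * β) ^ 2 := by gcongr
    _ = ‖⟪e, (groverIterate e ψ)^[K] ψ⟫‖ ^ 2 := by
        rw [norm_inner_iterate_groverIterate he hψ hsin, sq_abs]

theorem grover_success_probability (N : ℕ) (hN : 2 ≤ N) (x₀ : Fin N)
    (ψ₀ : EuclideanSpace ℂ (Fin N))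
    (hψ₀ : ∀ i, ψ₀ i = ((1 / Real.sqrt N : ℝ) : ℂ))
    (β : ℝ) (hβ : β = Real.arcsin (1 / Real.sqrt N))
    (Q : EuclideanSpace ℂ (Fin N) → EuclideanSpace ℂ (Fin N))
    (hQ : ∀ v, Q v = -(inversion ψ₀ (inversion (EuclideanSpace.single x₀ (1 : ℂ)) v)))
    (K : ℕ) (hK : (K : ℤ) = round (Real.pi / (4 * β) - 1 / 2)) :
    ‖⟪EuclideanSpace.single x₀ (1 : ℂ), Q^[K] ψ₀⟫‖ ^ 2 ≥ 1 - 1 / N := by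
  obtain rfl : Q = groverIterate (EuclideanSpace.single x₀ 1) ψ₀ := funext hQ
  have : Nonempty (Fin N) := ⟨x₀⟩
  have hψ₀_norm : ‖ψ₀‖ = 1 := norm_eq_one_of_forall_eq_one_div_sqrt_card (by simpa using hψ₀)
  have hoverlap : ‖⟪EuclideanSpace.single x₀ (1 : ℂ), ψ₀⟫‖ = 1 / √N := by
    simp [EuclideanSpace.inner_single_left, hψ₀]
  have hoverlap_ne : ⟪EuclideanSpace.single x₀ (1 : ℂ), ψ₀⟫ ≠ 0 := by
    simp [EuclideanSpace.inner_single_left, hψ₀, x₀.pos.ne']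
  simpa [hoverlap] using
    grover_success_probability_general (by simp) hψ₀_norm hoverlap_ne (hoverlap ▸ hβ) hK
end

section
/- Let E be an inner product space over ℂ, let x₀ ∈ E be a unit vector, let β ∈ (0, π/2) be real, let ψ₀ be a unit vector with ⟪x₀, ψ₀⟫ = sin β, set x₀⊥ = (1/cos β) • (ψ₀ - (sin β) • x₀), and let ψ₀⊥ = (cos β) • x₀ - (sin β) • x₀⊥ (a unit vector in the real span of x₀ and x₀⊥ orthogonal to ψ₀). Then for every vector v in the real span S_ℝ = {a • x₀ + b • x₀⊥ : a, b ∈ ℝ}, one has -(I_{ψ₀} (I_{x₀} v)) = I_{ψ₀⊥} (I_{x₀} v); that is, the Grover iterate Q = -I_{ψ₀} I_{x₀} restricted to the plane S_ℝ coincides with the composition of the two inversions I_{ψ₀⊥} ∘ I_{x₀}. -/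
open scoped ComplexInnerProductSpace

/-!
A vector `v` in the span of an orthonormal pair `ψ, φ` satisfies `v = ⟪ψ, v⟫ • ψ + ⟪φ, v⟫ • φ`, so
negating the inversion about `ψ` gives the inversion about `φ`. The pair `ψ₀, ψ₀perp` is the image
of the orthonormal pair `x₀, x₀perp` under a unitary change of coordinates of the plane they span,
and that plane is preserved by the inversion about `x₀`.
-/

section OrthonormalPair

open ComplexConjugate

variable {𝕜 E : Type*} [RCLike 𝕜] [NormedAddCommGroup E] [InnerProductSpace 𝕜 E]

theorem orthonormal_pair_iff {x y : E} :
    Orthonormal 𝕜 ![x, y] ↔ ‖x‖ = 1 ∧ ‖y‖ = 1 ∧ inner 𝕜 x y = 0 := by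
  simp [orthonormal_vecCons_iff, and_comm]

theorem eq_inner_smul_add_inner_smul_of_mem_span_pair {x y v : E}
    (hxy : Orthonormal 𝕜 ![x, y]) (hv : v ∈ Submodule.span 𝕜 {x, y}) :
    v = inner 𝕜 x v • x + inner 𝕜 y v • y := by
  obtain ⟨hx, hy, hxy₀⟩ := orthonormal_pair_iff.mp hxy
  obtain ⟨a, b, rfl⟩ := Submodule.mem_span_pair.mp hv
  simp [inner_add_right, inner_smul_right, hx, hy, hxy₀, inner_eq_zero_symm.mp hxy₀]

theorem norm_smul_add_smul_sq_of_inner_eq_zero {x y : E} (hxy : inner 𝕜 x y = 0) (a b : 𝕜) :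
    ‖a • x + b • y‖ ^ 2 = ‖a‖ ^ 2 * ‖x‖ ^ 2 + ‖b‖ ^ 2 * ‖y‖ ^ 2 := by
  have hab : inner 𝕜 (a • x) (b • y) = 0 := by
    simp [inner_smul_left, inner_smul_right, hxy]
  simpa only [← sq, norm_smul, mul_pow] using
    norm_add_sq_eq_norm_sq_add_norm_sq_of_inner_eq_zero (a • x) (b • y) hab

theorem orthonormal_pair_inv_smul_sub_inner_smul {x u : E} {c : 𝕜} (hx : ‖x‖ = 1) (hu : ‖u‖ = 1)
    (hc : c ≠ 0) (hxuc : ‖inner 𝕜 x u‖ ^ 2 + ‖c‖ ^ 2 = 1) :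
    Orthonormal 𝕜 ![x, c⁻¹ • (u - inner 𝕜 x u • x)] := by
  set y := c⁻¹ • (u - inner 𝕜 x u • x) with hy
  have hxy : inner 𝕜 x y = 0 := by
    simp [hy, inner_sub_right, inner_smul_right, hx]
  have hu_eq : u = inner 𝕜 x u • x + c • y := by
    rw [hy, smul_inv_smul₀ hc, add_sub_cancel]
  have hpythagoras : ‖u‖ ^ 2 = ‖inner 𝕜 x u‖ ^ 2 * ‖x‖ ^ 2 + ‖c‖ ^ 2 * ‖y‖ ^ 2 := by
    conv_lhs => rw [hu_eq]
    exact norm_smul_add_smul_sq_of_inner_eq_zero hxy _ _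
  have hcy : ‖c‖ ^ 2 * ‖y‖ ^ 2 = ‖c‖ ^ 2 * 1 := by
    rw [hu, hx] at hpythagoras
    linarith
  have hy_sq : ‖y‖ ^ 2 = 1 := mul_left_cancel₀ (pow_ne_zero 2 (norm_ne_zero_iff.mpr hc)) hcy
  exact orthonormal_pair_iff.mpr
    ⟨hx, (pow_eq_one_iff_of_nonneg (norm_nonneg y) two_ne_zero).mp hy_sq, hxy⟩

theorem orthonormal_pair_unitary {x y : E} {a b : 𝕜} (hxy : Orthonormal 𝕜 ![x, y])
    (hab : ‖a‖ ^ 2 + ‖b‖ ^ 2 = 1) :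
    Orthonormal 𝕜 ![a • x + b • y, conj b • x - conj a • y] := by
  obtain ⟨hx, hy, hxy₀⟩ := orthonormal_pair_iff.mp hxy
  have norm_eq_one (p q : 𝕜) (hpq : ‖p‖ ^ 2 + ‖q‖ ^ 2 = 1) : ‖p • x + q • y‖ = 1 := by
    rw [← pow_eq_one_iff_of_nonneg (norm_nonneg _) two_ne_zero,
      norm_smul_add_smul_sq_of_inner_eq_zero hxy₀, hx, hy, one_pow, mul_one, mul_one, hpq]
  refine orthonormal_pair_iff.mpr ⟨norm_eq_one a b hab, ?_, ?_⟩
  · rw [sub_eq_add_neg, ← neg_smul]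
    exact norm_eq_one _ _ (by simpa [add_comm] using hab)
  · simp [inner_add_left, inner_sub_right, inner_smul_left, inner_smul_right, hx, hy, hxy₀,
      inner_eq_zero_symm.mp hxy₀, mul_comm]

theorem span_pair_le_span_pair_unitary (x y : E) {a b : 𝕜} (hab : ‖a‖ ^ 2 + ‖b‖ ^ 2 = 1) :
    Submodule.span 𝕜 {x, y} ≤ Submodule.span 𝕜 {a • x + b • y, conj b • x - conj a • y} := by
  have hconj : conj a * a + conj b * b = 1 := by
    rw [RCLike.conj_mul, RCLike.conj_mul]
    exact_mod_cast hab
  rw [Submodule.span_le, Set.pair_subset_iff]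
  constructor
  · refine Submodule.mem_span_pair.mpr ⟨conj a, b, ?_⟩
    match_scalars
    · linear_combination hconj
    · ring
  · refine Submodule.mem_span_pair.mpr ⟨conj b, -a, ?_⟩
    match_scalars
    · ring
    · linear_combination hconj

end OrthonormalPair

section Inversion

open ComplexConjugate

variable {E : Type*} [NormedAddCommGroup E] [InnerProductSpace ℂ E]

theorem inversion_mem {S : Submodule ℂ E} {ψ v : E} (hψ : ψ ∈ S) (hv : v ∈ S) :
    inversion ψ v ∈ S :=
  S.sub_mem hv (S.smul_mem _ hψ)

theorem neg_inversion_eq_inversion_of_orthonormal_pair {ψ φ v : E} (hψφ : Orthonormal ℂ ![ψ, φ])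
    (hv : v ∈ Submodule.span ℂ {ψ, φ}) : -inversion ψ v = inversion φ v := by
  have hexpand : v = ⟪ψ, v⟫ • ψ + ⟪φ, v⟫ • φ :=
    eq_inner_smul_add_inner_smul_of_mem_span_pair hψφ hv
  unfold inversion
  linear_combination (norm := module) (-2 : ℂ) • hexpand

theorem grover_iterate_eq_two_inversions_general {x₀ ψ₀ x₀perp ψ₀perp v : E} {s c : ℂ}
    (hx₀ : ‖x₀‖ = 1) (hψ₀ : ‖ψ₀‖ = 1) (hc : c ≠ 0) (hsc : ‖s‖ ^ 2 + ‖c‖ ^ 2 = 1)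
    (hinner : ⟪x₀, ψ₀⟫ = s) (hx₀perp : x₀perp = c⁻¹ • (ψ₀ - s • x₀))
    (hψ₀perp : ψ₀perp = conj c • x₀ - conj s • x₀perp)
    (hv : v ∈ Submodule.span ℂ {x₀, x₀perp}) :
    -(inversion ψ₀ (inversion x₀ v)) = inversion ψ₀perp (inversion x₀ v) := by
  have hx₀_pair : Orthonormal ℂ ![x₀, x₀perp] := by
    subst hinner hx₀perp
    exact orthonormal_pair_inv_smul_sub_inner_smul hx₀ hψ₀ hc hsc
  have hψ₀_eq : ψ₀ = s • x₀ + c • x₀perp := by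
    rw [hx₀perp, smul_inv_smul₀ hc, add_sub_cancel]
  have hψ₀_pair : Orthonormal ℂ ![ψ₀, ψ₀perp] := by
    rw [hψ₀_eq, hψ₀perp]
    exact orthonormal_pair_unitary hx₀_pair hsc
  have hplane : Submodule.span ℂ {x₀, x₀perp} ≤ Submodule.span ℂ {ψ₀, ψ₀perp} := by
    rw [hψ₀_eq, hψ₀perp]
    exact span_pair_le_span_pair_unitary x₀ x₀perp hsc
  have hx₀_mem : x₀ ∈ Submodule.span ℂ {x₀, x₀perp} := Submodule.mem_span_of_mem (by simp)
  exact neg_inversion_eq_inversion_of_orthonormal_pair hψ₀_pair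
    (hplane (inversion_mem hx₀_mem hv))

end Inversion

theorem grover_iterate_eq_two_inversions {E : Type*} [NormedAddCommGroup E]
    [InnerProductSpace ℂ E] (x₀ ψ₀ x₀perp ψ₀perp : E) (β : ℝ)
    (hx₀ : ‖x₀‖ = 1) (hψ₀ : ‖ψ₀‖ = 1)
    (hβ : β ∈ Set.Ioo 0 (Real.pi / 2))
    (hinner : ⟪x₀, ψ₀⟫ = (Real.sin β : ℂ))
    (hx₀perp : x₀perp = ((1 / Real.cos β : ℝ) : ℂ) • (ψ₀ - ((Real.sin β : ℝ) : ℂ) • x₀))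
    (hψ₀perp : ψ₀perp = ((Real.cos β : ℝ) : ℂ) • x₀ - ((Real.sin β : ℝ) : ℂ) • x₀perp) :
    ∀ v ∈ {w : E | ∃ a b : ℝ, w = (a : ℂ) • x₀ + (b : ℂ) • x₀perp},
      -(inversion ψ₀ (inversion x₀ v)) = inversion ψ₀perp (inversion x₀ v) := by
  rintro v ⟨a, b, hv⟩
  have hcos : Real.cos β ≠ 0 :=
    (Real.cos_pos_of_mem_Ioo ⟨by linarith [hβ.1, Real.pi_pos], hβ.2⟩).ne'
  have hsq : ‖(Real.sin β : ℂ)‖ ^ 2 + ‖(Real.cos β : ℂ)‖ ^ 2 = 1 := by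
    simp only [Complex.norm_real, Real.norm_eq_abs, sq_abs, Real.sin_sq_add_cos_sq]
  exact grover_iterate_eq_two_inversions_general hx₀ hψ₀ (Complex.ofReal_ne_zero.mpr hcos) hsq
    hinner (by simpa using hx₀perp) (by simpa only [Complex.conj_ofReal] using hψ₀perp)
    (Submodule.mem_span_pair.mpr ⟨a, b, hv.symm⟩)
end
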